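/- For every superlinear function g : ℕ → ℕ and every α ≥ 1, the class C_g is not adaptively additively α-robustly learnable; moreover, there exists an adaptive additive adversary V_add with fixed constant budget that is a universal α-adversary for C_g. -/

import Mathlib

open scoped ENNReal NNReal

/-- Total variation distance between two discrete distributions. -/
noncomputable def tv {X : Type*} (p q : PMF X) : ℝ :=
  (∑' x, |(p x).toReal - (q x).toReal|) / 2

/-- The distribution of an i.i.d. sample of size `m` from `p`, viewed as a multiset. -/
noncomputable def iid {X : Type*} (p : PMF X) : ℕ → PMF (Multiset X)
  | 0 => PMF.pure 0
  | n + 1 => (iid p n).bind fun s => p.map fun x => x ::ₘ s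

/-- `|Q|^m` : first draw `q ∼ Q`, then an i.i.d. sample `S ∼ q^m`. -/
noncomputable def metaSample {X : Type*} (Q : PMF (PMF X)) (m : ℕ) : PMF (Multiset X) :=
  Q.bind fun q => iid q m

/-- An adaptive adversary: a randomized map from samples (finite multisets) to samples. -/
abbrev Adversary (X : Type*) := Multiset X → PMF (Multiset X)

/-- `V(P)`: the distribution of `V S` for `S ∼ P` (including internal randomness). -/
noncomputable def advPush {X : Type*} (V : Adversary X) (P : PMF (Multiset X)) :
    PMF (Multiset X) := P.bind V

/-- An additive adversary only adds points: `S ⊆ V(S)` almost surely. -/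
def IsAdditive {X : Type*} (V : Adversary X) : Prop :=
  ∀ S T, T ∈ (V S).support → S ≤ T

/-- A subtractive adversary only removes points: `V(S) ⊆ S` almost surely. -/
def IsSubtractive {X : Type*} (V : Adversary X) : Prop :=
  ∀ S T, T ∈ (V S).support → T ≤ S

/-- Fixed constant budget `η`: `|V(S)|` depends only on `|S|` (via `c`), and for every `m`,
`η m − 1 < m·budget(V,m) ≤ η m` where `m·budget(V,m) = ||V(S)| − |S||`. -/
def FixedBudget {X : Type*} (V : Adversary X) (η : ℝ) : Prop :=
  ∃ c : ℕ → ℕ, (∀ S T, T ∈ (V S).support → Multiset.card T = c (Multiset.card S)) ∧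
    ∀ m : ℕ, η * m - 1 < |(c m : ℝ) - m| ∧ |(c m : ℝ) - m| ≤ η * m

/-- Fixed constant budget `η` for an additive adversary (`m·budget(V,m) = |V(S)| − |S|`). -/
def FixedBudgetAdd {X : Type*} (V : Adversary X) (η : ℝ) : Prop :=
  ∃ c : ℕ → ℕ, (∀ S T, T ∈ (V S).support → Multiset.card T = c (Multiset.card S)) ∧
    ∀ m : ℕ, η * m - 1 < (c m : ℝ) - m ∧ (c m : ℝ) - m ≤ η * m

/-- Fixed constant budget `η` for a subtractive adversary (`m·budget(V,m) = |S| − |V(S)|`). -/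
def FixedBudgetSub {X : Type*} (V : Adversary X) (η : ℝ) : Prop :=
  ∃ c : ℕ → ℕ, (∀ S T, T ∈ (V S).support → Multiset.card T = c (Multiset.card S)) ∧
    ∀ m : ℕ, η * m - 1 < (m : ℝ) - c m ∧ (m : ℝ) - c m ≤ η * m

/-- Probability of an event under a discrete distribution. -/
noncomputable def probEvent {β : Type*} (P : PMF β) (E : Set β) : ℝ≥0∞ :=
  P.toOuterMeasure E

/-- `A` with sample complexity `mc` learns the class `C` against adversary `V`,
up to error `bound + ε` with confidence `1 − δ` once `m ≥ mc ε δ`. -/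
def RobustLearnerFor {X : Type*} (C : Set (PMF X)) (A : Multiset X → PMF X)
    (mc : ℝ → ℝ → ℕ) (V : Adversary X) (bound : ℝ) : Prop :=
  ∀ p ∈ C, ∀ ε δ : ℝ, 0 < ε → ε < 1 → 0 < δ → δ < 1 →
    ∀ m : ℕ, mc ε δ ≤ m →
      1 - ENNReal.ofReal δ ≤
        probEvent ((iid p m).bind V) {T | tv (A T) p ≤ bound + ε}

/-- `C` is adaptively α-robustly learnable w.r.t. the single adversary `V` with budget `η`. -/
def RobustlyLearnableWrt {X : Type*} (C : Set (PMF X)) (α : ℝ)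
    (V : Adversary X) (η : ℝ) : Prop :=
  ∃ A mc, RobustLearnerFor C A mc V (α * η)

/-- `V` (with budget `η`) is a universal α-adversary for `C`. -/
def UniversalAdversary {X : Type*} (C : Set (PMF X)) (α : ℝ)
    (V : Adversary X) (η : ℝ) : Prop :=
  ¬ RobustlyLearnableWrt C α V η

/-- `C` is adaptively α-robustly learnable w.r.t. a class `𝒱` of adversaries
(each given with its budget). -/
def RobustlyLearnableWrtClass {X : Type*} (C : Set (PMF X)) (α : ℝ)
    (𝒱 : Set (Adversary X × ℝ)) : Prop :=
  ∃ A mc, ∀ Vη ∈ 𝒱, RobustLearnerFor C A mc Vη.1 (α * Vη.2)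

/-- `C` is adaptively additively α-robustly learnable: one learner works simultaneously
against all additive adaptive adversaries with fixed constant budgets. -/
def AdditivelyRobustlyLearnable {X : Type*} (C : Set (PMF X)) (α : ℝ) : Prop :=
  ∃ A mc, ∀ V : Adversary X, ∀ η : ℝ, 0 < η → η < 1 →
    IsAdditive V → FixedBudgetAdd V η → RobustLearnerFor C A mc V (α * η)

/-- `C` is adaptively subtractively α-robustly learnable. -/
def SubtractivelyRobustlyLearnable {X : Type*} (C : Set (PMF X)) (α : ℝ) : Prop :=
  ∃ A mc, ∀ V : Adversary X, ∀ η : ℝ, 0 < η → η < 1 →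
    IsSubtractive V → FixedBudgetSub V η → RobustLearnerFor C A mc V (α * η)

/-- The pair `(V1, V2)` successfully `(γ,ζ)`-confuses `C`-generated samples of size `m`. -/
def ConfusesPair {X : Type*} (C : Set (PMF X)) (V1 V2 : Adversary X)
    (γ ζ : ℝ) (m : ℕ) : Prop :=
  ∃ p ∈ C, ∃ Q : PMF (PMF X), Q.support ⊆ C ∧
    (∀ q ∈ Q.support, γ < tv p q) ∧
    tv (advPush V1 (metaSample Q m)) (advPush V2 (iid p m)) < ζ

/-- A single adversary `V` successfully `(γ,ζ)`-confuses `C`-generated samples of size `m`. -/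
def Confuses {X : Type*} (C : Set (PMF X)) (V : Adversary X) (γ ζ : ℝ) (m : ℕ) : Prop :=
  ConfusesPair C V V γ ζ m

/-- `p` is the distribution `p_{i,j,k} = (1 − 1/j)·δ_{(0,0)} + (1/j − 1/k)·U_{B_i×{2j+1}}
 + (1/k)·δ_{(i,2j+2)}` on `ℕ × ℕ`. -/
def IsPijk (B : ℕ → Finset ℕ) (i j k : ℕ) (p : PMF (ℕ × ℕ)) : Prop :=
  ∀ x : ℕ × ℕ,
    p x = (1 - ((j : ℝ≥0∞))⁻¹) * (if x = (0, 0) then 1 else 0)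
      + (((j : ℝ≥0∞))⁻¹ - ((k : ℝ≥0∞))⁻¹) *
          (if x.1 ∈ B i ∧ x.2 = 2 * j + 1 then (((B i).card : ℝ≥0∞))⁻¹ else 0)
      + ((k : ℝ≥0∞))⁻¹ * (if x = (i, 2 * j + 2) then 1 else 0)

/-- The class `C_g = {p_{i,j,g(j)} : i, j ∈ ℕ}` (for the meaningful parameters). -/
def Cg (B : ℕ → Finset ℕ) (g : ℕ → ℕ) : Set (PMF (ℕ × ℕ)) :=
  {p | ∃ i j : ℕ, 1 ≤ j ∧ j < g j ∧ (B i).Nonempty ∧ IsPijk B i j (g j) p}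

/-- `g` is superlinear: `g(n)/n → ∞`. -/
def Superlinear (g : ℕ → ℕ) : Prop :=
  Filter.Tendsto (fun n => (g n : ℝ) / n) Filter.atTop Filter.atTop

theorem iid_map {X Y : Type*} (p : PMF X) (f : X → Y) (m : ℕ) :
    iid (p.map f) m = (iid p m).map (Multiset.map f) := by
  induction m with
  | zero => simp [iid, PMF.pure_map]
  | succ n ih =>
    simp only [iid, ih, PMF.map_bind, PMF.bind_map, PMF.map_comp]
    congr 1
    funext s
    simp only [Function.comp_def, Multiset.map_cons]

theorem iid_card {X : Type*} (p : PMF X) (m : ℕ) :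
    ∀ w ∈ (iid p m).support, Multiset.card w = m := by
  induction m with
  | zero => simp [iid]
  | succ n ih =>
    intro w hw
    simp only [iid, PMF.mem_support_bind_iff, PMF.support_map, Set.mem_image] at hw
    obtain ⟨s, hs, x, _, rfl⟩ := hw
    simp [ih s hs]

theorem bind_tsum {X Y : Type*} (p : PMF X) (f : X → PMF Y) (h : Y → ℝ≥0∞) :
    ∑' y, (p.bind f) y * h y = ∑' x, p x * ∑' y, f x y * h y := by
  simp only [PMF.bind_apply, ← ENNReal.tsum_mul_right, ← ENNReal.tsum_mul_left]
  rw [ENNReal.tsum_comm]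
  simp only [mul_assoc]

theorem map_tsum {X Y : Type*} (p : PMF X) (f : X → Y) (h : Y → ℝ≥0∞) :
    ∑' y, (p.map f) y * h y = ∑' x, p x * h (f x) := by
  rw [PMF.map, bind_tsum]
  congr 1
  funext x
  congr 1
  rw [tsum_eq_single (f x)]
  · simp
  · intro b hb
    simp [hb]

theorem iid_count {X : Type*} [DecidableEq X] (p : PMF X) (t : X) (m : ℕ) :
    ∑' w, (iid p m) w * (Multiset.count t w : ℝ≥0∞) = m * p t := by
  induction m with
  | zero =>
    rw [tsum_eq_single 0]
    · simp
    · intro b hb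
      simp [iid, hb]
  | succ n ih =>
    simp only [iid, bind_tsum, map_tsum, Multiset.count_cons, Nat.cast_add, mul_add,
      ENNReal.tsum_add, ENNReal.tsum_mul_right, PMF.tsum_coe, one_mul, ih]
    have : ∑' x, p x * (((if t = x then 1 else 0 : ℕ)) : ℝ≥0∞) = p t := by
      rw [tsum_eq_single t]
      · simp
      · intro b hb
        simp [hb.symm]
    rw [this]
    push_cast
    ring

theorem tv_summable {X : Type*} (p q : PMF X) :
    Summable fun x => |(p x).toReal - (q x).toReal| := by
  have h (p : PMF X) : Summable fun x => (p x).toReal :=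
    ENNReal.summable_toReal p.tsum_coe_ne_top
  exact ((h p).sub (h q)).abs

/-- Two distributions both close to `q` are close on every finite set. -/
theorem tv_two {X : Type*} (q p p' : PMF X) (r : ℝ) (h : tv q p ≤ r) (h' : tv q p' ≤ r)
    (F : Finset X) : ∑ x ∈ F, |(p x).toReal - (p' x).toReal| ≤ 4 * r := by
  have h1 := (tv_summable q p).sum_le_tsum F (fun _ _ => abs_nonneg _)
  have h2 := (tv_summable q p').sum_le_tsum F (fun _ _ => abs_nonneg _)
  have h3 : ∑ x ∈ F, |(p x).toReal - (p' x).toReal| ≤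
      ∑ x ∈ F, |(q x).toReal - (p x).toReal| + ∑ x ∈ F, |(q x).toReal - (p' x).toReal| := by
    rw [← Finset.sum_add_distrib]
    refine Finset.sum_le_sum fun x _ => ?_
    rw [abs_sub_comm (q x).toReal (p x).toReal]
    exact abs_sub_le _ _ _
  unfold tv at h' h
  linarith

/-- Latent space: `none` is the point `(0,0)`, `some none` the index point. -/
abbrev LatSp (n : ℕ) := Option (Option (Fin n))

noncomputable def latW (n j k : ℕ) : LatSp n → ℝ≥0∞
  | none => 1 - (j : ℝ≥0∞)⁻¹
  | some none => (k : ℝ≥0∞)⁻¹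
  | some (some _) => ((j : ℝ≥0∞)⁻¹ - (k : ℝ≥0∞)⁻¹) * (n : ℝ≥0∞)⁻¹

theorem latW_sum (n j k : ℕ) (hn : 0 < n) (hj : 1 ≤ j) (hk : j < k) :
    ∑ x, latW n j k x = 1 := by
  have h1 : (k : ℝ≥0∞)⁻¹ ≤ (j : ℝ≥0∞)⁻¹ := by
    rw [ENNReal.inv_le_inv]; exact_mod_cast hk.le
  have h2 : (j : ℝ≥0∞)⁻¹ ≤ 1 := by
    rw [ENNReal.inv_le_one]; exact_mod_cast hj
  rw [Fintype.sum_option, Fintype.sum_option]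
  simp only [latW, Finset.sum_const, Finset.card_univ, Fintype.card_fin, nsmul_eq_mul]
  rw [mul_comm (n : ℝ≥0∞), mul_assoc, ENNReal.inv_mul_cancel (by exact_mod_cast hn.ne')
    (ENNReal.natCast_ne_top n), mul_one, add_tsub_cancel_of_le h1, tsub_add_cancel_of_le h2]

noncomputable def lat (n j k : ℕ) (hn : 0 < n) (hj : 1 ≤ j) (hk : j < k) : PMF (LatSp n) :=
  PMF.ofFintype (latW n j k) (latW_sum n j k hn hj hk)

def pt {n : ℕ} (σ : Fin n → Bool) (a : Fin n) : ℕ := 2 * (a : ℕ) + (σ a).toNat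

theorem pt_inj {n : ℕ} (σ τ : Fin n → Bool) (a b : Fin n) :
    pt σ a = pt τ b ↔ a = b ∧ σ a = τ b := by
  unfold pt
  rw [Fin.ext_iff]
  cases σ a <;> cases τ b <;> simp <;> omega

def Bs {n : ℕ} (σ : Fin n → Bool) : Finset ℕ := Finset.univ.image (pt σ)

theorem Bs_card {n : ℕ} (σ : Fin n → Bool) : (Bs σ).card = n := by
  unfold Bs
  rw [Finset.card_image_of_injective]
  · simp
  · intro a b h
    exact ((pt_inj σ σ a b).1 h).1

def emb (code : Finset ℕ → ℕ) (j : ℕ) {n : ℕ} (σ : Fin n → Bool) : LatSp n → ℕ × ℕ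
  | none => (0, 0)
  | some none => (code (Bs σ), 2 * j + 2)
  | some (some a) => (pt σ a, 2 * j + 1)

theorem ite_inst (c : Prop) (d1 d2 : Decidable c) (a b : ℝ≥0∞) :
    @ite _ c d1 a b = @ite _ c d2 a b := by
  congr!

theorem isPijk_map (B : ℕ → Finset ℕ) (code : Finset ℕ → ℕ) (hc : ∀ D, B (code D) = D)
    (n j k : ℕ) (hn : 0 < n) (hj : 1 ≤ j) (hk : j < k) (σ : Fin n → Bool) :
    IsPijk B (code (Bs σ)) j k ((lat n j k hn hj hk).map (emb code j σ)) := by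
  intro x
  rw [PMF.map_apply, tsum_fintype, Fintype.sum_option, Fintype.sum_option]
  simp only [lat, PMF.ofFintype_apply, latW, emb, hc, Bs_card]
  have : ∑ a : Fin n, (if x = (pt σ a, 2 * j + 1) then
      ((j : ℝ≥0∞)⁻¹ - (k : ℝ≥0∞)⁻¹) * (n : ℝ≥0∞)⁻¹ else 0) =
      ((j : ℝ≥0∞)⁻¹ - (k : ℝ≥0∞)⁻¹) *
        (if x.1 ∈ Bs σ ∧ x.2 = 2 * j + 1 then (n : ℝ≥0∞)⁻¹ else 0) := by
    split_ifs with h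
    · obtain ⟨h1, h2⟩ := h
      obtain ⟨a, -, ha⟩ := Finset.mem_image.1 h1
      rw [Finset.sum_eq_single a]
      · rw [if_pos]
        exact Prod.ext ha.symm h2
      · intro b _ hb
        rw [if_neg]
        rintro rfl
        exact hb ((pt_inj σ σ a b).1 ha).1.symm
      · simp
    · rw [mul_zero]
      refine Finset.sum_eq_zero fun a _ => ?_
      rw [if_neg]
      rintro rfl
      exact h ⟨Finset.mem_image_of_mem _ (Finset.mem_univ _), rfl⟩
  trans ((if x = (0, 0) then 1 - (j : ℝ≥0∞)⁻¹ else 0) +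
    ((if x = (code (Bs σ), 2 * j + 2) then (k : ℝ≥0∞)⁻¹ else 0) +
     ∑ a : Fin n, (if x = (pt σ a, 2 * j + 1) then
      ((j : ℝ≥0∞)⁻¹ - (k : ℝ≥0∞)⁻¹) * (n : ℝ≥0∞)⁻¹ else 0)))
  · exact congrArg₂ _ (ite_inst _ _ _ _ _) (congrArg₂ _ (ite_inst _ _ _ _ _)
      (Finset.sum_congr rfl fun a _ => ite_inst _ _ _ _ _))
  rw [this]
  simp only [mul_ite, mul_one, mul_zero]
  ring

/-- Flip the hidden bits not revealed by the latent sample. -/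
def flipB {n : ℕ} (w : Multiset (LatSp n)) (σ : Fin n → Bool) : Fin n → Bool :=
  fun a => if some (some a) ∈ w then σ a else !σ a

theorem flipB_flipB {n : ℕ} (w : Multiset (LatSp n)) (σ : Fin n → Bool) :
    flipB w (flipB w σ) = σ := by
  funext a
  unfold flipB
  split_ifs <;> simp

def flipSet (j : ℕ) (D : Finset ℕ) (S : Multiset (ℕ × ℕ)) : Finset ℕ :=
  D.image fun a => if (a, 2 * j + 1) ∈ S then a else if a % 2 = 0 then a + 1 else a - 1

theorem mem_emb (code : Finset ℕ → ℕ) (j : ℕ) {n : ℕ} (σ : Fin n → Bool)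
    (w : Multiset (LatSp n)) (a : Fin n) :
    (pt σ a, 2 * j + 1) ∈ w.map (emb code j σ) ↔ some (some a) ∈ w := by
  rw [Multiset.mem_map]
  constructor
  · rintro ⟨x, hx, h⟩
    rcases x with _ | _ | b
    · simp [emb] at h
    · simp [emb] at h
    · simp only [emb, Prod.mk.injEq, and_true] at h
      rw [pt_inj] at h
      rwa [← h.1]
  · intro h
    exact ⟨_, h, rfl⟩

theorem mem_emb_t (code : Finset ℕ → ℕ) (j : ℕ) {n : ℕ} (σ : Fin n → Bool)
    (w : Multiset (LatSp n)) (i : ℕ) (h : (i, 2 * j + 2) ∈ w.map (emb code j σ)) :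
    i = code (Bs σ) ∧ some none ∈ w := by
  rw [Multiset.mem_map] at h
  obtain ⟨x, hx, h⟩ := h
  rcases x with _ | _ | b
  · simp [emb] at h
  · simp only [emb, Prod.mk.injEq, and_true] at h
    exact ⟨h.symm, hx⟩
  · simp [emb] at h

theorem flipSet_emb (code : Finset ℕ → ℕ) (j : ℕ) {n : ℕ} (σ : Fin n → Bool)
    (w : Multiset (LatSp n)) :
    flipSet j (Bs σ) (w.map (emb code j σ)) = Bs (flipB w σ) := by
  unfold flipSet Bs
  rw [Finset.image_image]
  refine Finset.image_congr fun a _ => ?_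
  simp only [Function.comp, mem_emb]
  unfold flipB pt
  split_ifs with h1 h2 <;> cases hs : σ a <;> simp_all <;> omega

open Classical in
noncomputable def idx (j : ℕ) (S : Multiset (ℕ × ℕ)) : ℕ :=
  if h : ∃ i, (i, 2 * j + 2) ∈ S then h.choose else 0

noncomputable def Vf (B : ℕ → Finset ℕ) (code : Finset ℕ → ℕ) (j : ℕ) (η : ℝ)
    (S : Multiset (ℕ × ℕ)) : Multiset (ℕ × ℕ) :=
  S + (Multiset.replicate
        (min (S.count (idx j S, 2 * j + 2)) ⌊η * (Multiset.card S : ℝ)⌋₊)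
        (code (flipSet j (B (idx j S)) S), 2 * j + 2)
    + Multiset.replicate (⌊η * (Multiset.card S : ℝ)⌋₊ -
        min (S.count (idx j S, 2 * j + 2)) ⌊η * (Multiset.card S : ℝ)⌋₊) (0, 0))

theorem Vf_card (B : ℕ → Finset ℕ) (code : Finset ℕ → ℕ) (j : ℕ) (η : ℝ)
    (S : Multiset (ℕ × ℕ)) :
    Multiset.card (Vf B code j η S) = Multiset.card S + ⌊η * (Multiset.card S : ℝ)⌋₊ := by
  unfold Vf
  simp only [Multiset.card_add, Multiset.card_replicate]
  omega

theorem emb_split (code : Finset ℕ → ℕ) (j : ℕ) {n : ℕ} (σ : Fin n → Bool)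
    (w : Multiset (LatSp n)) :
    w.map (emb code j σ) = (w.filter (fun x => ¬ (some none = x))).map (emb code j σ) +
      Multiset.replicate (w.count (some none)) (code (Bs σ), 2 * j + 2) := by
  conv_lhs => rw [← Multiset.filter_add_not (fun x => some none = x) w]
  rw [Multiset.map_add, add_comm, Multiset.filter_eq, Multiset.map_replicate]
  rfl

theorem emb_common (code : Finset ℕ → ℕ) (j : ℕ) {n : ℕ} (σ : Fin n → Bool)
    (w : Multiset (LatSp n)) :
    (w.filter (fun x => ¬ (some none = x))).map (emb code j (flipB w σ)) =
    (w.filter (fun x => ¬ (some none = x))).map (emb code j σ) := by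
  refine Multiset.map_congr rfl fun x hx => ?_
  rw [Multiset.mem_filter] at hx
  rcases x with _ | _ | a
  · rfl
  · exact absurd rfl hx.2
  · simp [emb, pt, flipB, hx.1]

theorem count_emb (code : Finset ℕ → ℕ) (j : ℕ) {n : ℕ} (σ : Fin n → Bool)
    (w : Multiset (LatSp n)) :
    (w.map (emb code j σ)).count (code (Bs σ), 2 * j + 2) = w.count (some none) := by
  rw [emb_split, Multiset.count_add, Multiset.count_replicate_self, Multiset.count_eq_zero.2,
    zero_add]
  intro h
  have := (mem_emb_t code j σ _ _ h).2
  simp at this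

theorem Vf_emb (B : ℕ → Finset ℕ) (code : Finset ℕ → ℕ) (hc : ∀ D, B (code D) = D)
    (j : ℕ) (η : ℝ) {n : ℕ} (σ : Fin n → Bool) (w : Multiset (LatSp n))
    (hK : w.count (some none) ≤ ⌊η * (Multiset.card w : ℝ)⌋₊) :
    Vf B code j η (w.map (emb code j σ)) =
      (w.filter (fun x => ¬ (some none = x))).map (emb code j σ) +
      (Multiset.replicate (w.count (some none)) (code (Bs σ), 2 * j + 2) +
       Multiset.replicate (w.count (some none)) (code (Bs (flipB w σ)), 2 * j + 2)) +
      Multiset.replicate (⌊η * (Multiset.card w : ℝ)⌋₊ - w.count (some none)) (0, 0) := by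
  unfold Vf
  rw [Multiset.card_map]
  by_cases h : some none ∈ w
  · have hi : idx j (w.map (emb code j σ)) = code (Bs σ) := by
      have h' : ∃ i, (i, 2 * j + 2) ∈ w.map (emb code j σ) :=
        ⟨code (Bs σ), Multiset.mem_map.2 ⟨_, h, rfl⟩⟩
      unfold idx
      rw [dif_pos h']
      exact (mem_emb_t code j σ w _ h'.choose_spec).1
    rw [hi, count_emb, min_eq_left hK, hc, flipSet_emb]
    conv_lhs => rw [emb_split]
    simp only [add_assoc]
  · have h0 : w.count (some none) = 0 := Multiset.count_eq_zero.2 h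
    have h1 : (w.map (emb code j σ)).count (idx j (w.map (emb code j σ)), 2 * j + 2) = 0 :=
      Multiset.count_eq_zero.2 fun h2 => h (mem_emb_t code j σ w _ h2).2
    rw [h1, h0]
    conv_lhs => rw [emb_split, h0]
    simp

theorem Vf_flip (B : ℕ → Finset ℕ) (code : Finset ℕ → ℕ) (hc : ∀ D, B (code D) = D)
    (j : ℕ) (η : ℝ) {n : ℕ} (σ : Fin n → Bool) (w : Multiset (LatSp n))
    (hK : w.count (some none) ≤ ⌊η * (Multiset.card w : ℝ)⌋₊) :
    Vf B code j η (w.map (emb code j (flipB w σ))) = Vf B code j η (w.map (emb code j σ)) := by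
  rw [Vf_emb B code hc j η σ w hK, Vf_emb B code hc j η (flipB w σ) w hK, flipB_flipB, emb_common]
  congr 2
  rw [add_comm]

/-- The distributions of `σ` and `flipB w σ` are far apart. -/
theorem far (B : ℕ → Finset ℕ) (code : Finset ℕ → ℕ) (hc : ∀ D, B (code D) = D)
    (m j k : ℕ) (hn : 0 < 2 * m) (hj : 1 ≤ j) (hk : j < k) (σ : Fin (2 * m) → Bool)
    (w : Multiset (LatSp (2 * m))) (hw : Multiset.card w = m) (q : PMF (ℕ × ℕ)) (r : ℝ)
    (h1 : tv q ((lat (2 * m) j k hn hj hk).map (emb code j σ)) ≤ r)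
    (h2 : tv q ((lat (2 * m) j k hn hj hk).map (emb code j (flipB w σ))) ≤ r) :
    ((j : ℝ)⁻¹ - (k : ℝ)⁻¹) / 2 ≤ 4 * r := by
  set U : Finset (Fin (2 * m)) := Finset.univ.filter fun a => some (some a) ∉ w with hU
  have hinj : Function.Injective fun a : Fin (2 * m) => (pt σ a, 2 * j + 1) := by
    intro a b h
    simp only [Prod.mk.injEq, and_true] at h
    exact ((pt_inj σ σ a b).1 h).1
  have hcard : m ≤ U.card := by
    have ha : (Finset.univ.filter fun a : Fin (2 * m) => some (some a) ∈ w).card ≤ m := by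
      have hle : (Finset.univ.filter fun a : Fin (2 * m) => some (some a) ∈ w).card ≤
          w.toFinset.card := by
        refine Finset.card_le_card_of_injOn (fun a => some (some a)) ?_ ?_
        · intro a ha
          simpa using ha
        · intro a _ b _ h
          simpa using h
      exact hle.trans ((Multiset.toFinset_card_le w).trans hw.le)
    have hb := Finset.card_filter_add_card_filter_not (s := (Finset.univ : Finset (Fin (2 * m))))
      (fun a => some (some a) ∈ w)
    simp only [Finset.card_univ, Fintype.card_fin] at hb
    have hb' : (Finset.univ.filter fun a : Fin (2 * m) => some (some a) ∈ w).card + U.card =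
        2 * m := by
      refine Eq.trans ?_ hb
      rw [hU]
    omega
  have key := tv_two q _ _ r h1 h2 (U.image fun a => (pt σ a, 2 * j + 1))
  rw [Finset.sum_image (fun a _ b _ h => hinj h)] at key
  have hkj : (k : ℝ≥0∞)⁻¹ ≤ (j : ℝ≥0∞)⁻¹ := by
    rw [ENNReal.inv_le_inv]; exact_mod_cast hk.le
  have hj0 : (j : ℝ≥0∞)⁻¹ ≠ ⊤ := by
    simp; omega
  have hkj' : (k : ℝ)⁻¹ ≤ (j : ℝ)⁻¹ := by
    have : (0 : ℝ) < j := by exact_mod_cast hj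
    gcongr
  have hsum : ∀ a ∈ U, |(((lat (2 * m) j k hn hj hk).map (emb code j σ))
      (pt σ a, 2 * j + 1)).toReal - (((lat (2 * m) j k hn hj hk).map
        (emb code j (flipB w σ))) (pt σ a, 2 * j + 1)).toReal| =
      ((j : ℝ)⁻¹ - (k : ℝ)⁻¹) * ((2 * m : ℕ) : ℝ)⁻¹ := by
    intro a ha
    have ha' : some (some a) ∉ w := by simpa [hU] using ha
    have hm1 : pt σ a ∈ Bs σ := Finset.mem_image_of_mem _ (Finset.mem_univ _)
    have hm2 : pt σ a ∉ Bs (flipB w σ) := by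
      intro h
      obtain ⟨b, -, hb⟩ := Finset.mem_image.1 h
      obtain ⟨rfl, hb2⟩ := (pt_inj _ _ _ _).1 hb
      simp [flipB, ha'] at hb2
    rw [isPijk_map B code hc, isPijk_map B code hc]
    simp only [hc, Bs_card, hm1, hm2]
    simp only [Prod.mk.injEq, Nat.add_eq_zero_iff, one_ne_zero, and_false, if_false, mul_zero,
      and_true, if_true, zero_add, add_zero, false_and, Nat.add_left_cancel_iff,
      OfNat.one_ne_ofNat, ENNReal.toReal_zero, sub_zero]
    rw [ENNReal.toReal_mul, ENNReal.toReal_sub_of_le hkj hj0]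
    simp only [ENNReal.toReal_inv, ENNReal.toReal_natCast]
    exact abs_of_nonneg (mul_nonneg (sub_nonneg.2 hkj') (by positivity))
  rw [Finset.sum_congr rfl hsum, Finset.sum_const, nsmul_eq_mul] at key
  refine le_trans ?_ key
  have hm0 : (0 : ℝ) < m := by exact_mod_cast (by omega : 0 < m)
  have hc' : (m : ℝ) ≤ U.card := by exact_mod_cast hcard
  calc ((j : ℝ)⁻¹ - (k : ℝ)⁻¹) / 2 = (m : ℝ) * (((j : ℝ)⁻¹ - (k : ℝ)⁻¹) * ((2 * m : ℕ) : ℝ)⁻¹) := by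
        push_cast; field_simp
    _ ≤ _ := by
        apply mul_le_mul_of_nonneg_right hc'
        exact mul_nonneg (sub_nonneg.2 hkj') (by positivity)

theorem markov {X : Type*} [DecidableEq X] (p : PMF X) (t : X) (m E : ℕ) :
    (∑' w, (iid p m) w * (if E < Multiset.count t w then 1 else 0)) * ((E : ℝ≥0∞) + 1) ≤
      m * p t := by
  rw [← iid_count, ← ENNReal.tsum_mul_right]
  refine ENNReal.tsum_le_tsum fun w => ?_
  rw [mul_assoc]
  gcongr
  split_ifs with h
  · rw [one_mul]; exact_mod_cast h
  · simp

/-- Averaging argument. -/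
theorem averaging {W Sg : Type*} [Fintype Sg] [Nonempty Sg] (P : PMF W) (G : Sg → Set W)
    (bad : Set W) [DecidablePred (· ∈ bad)] (fl : W → Sg → Sg)
    (hfl : ∀ w s, fl w (fl w s) = s)
    (hG : ∀ w ∈ P.support, w ∉ bad → ∀ s, w ∈ G s → w ∉ G (fl w s))
    (c : ℝ≥0∞) (hc : ∀ s, c ≤ P.toOuterMeasure (G s)) :
    2 * c ≤ 1 + 2 * ∑' w, P w * (if w ∈ bad then 1 else 0) := by
  classical
  set N : ℝ≥0∞ := (Fintype.card Sg : ℝ≥0∞) with hN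
  have hN0 : N ≠ 0 := by simp [hN]
  have hNt : N ≠ ⊤ := ENNReal.natCast_ne_top _
  have h1 : N * c ≤ ∑ s, P.toOuterMeasure (G s) := by
    calc N * c = ∑ _s : Sg, c := by simp [hN]
      _ ≤ _ := Finset.sum_le_sum fun s _ => hc s
  have h2 : ∑ s, P.toOuterMeasure (G s) =
      ∑' w, P w * ∑ s, (if w ∈ G s then (1 : ℝ≥0∞) else 0) := by
    simp only [PMF.toOuterMeasure_apply, Finset.mul_sum]
    rw [Summable.tsum_finsetSum (fun _ _ => ENNReal.summable)]
    refine Finset.sum_congr rfl fun s _ => ?_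
    congr 1
    funext w
    simp [Set.indicator]
  have h3 : 2 * ∑' w, P w * ∑ s, (if w ∈ G s then (1 : ℝ≥0∞) else 0) ≤
      ∑' w, (P w * N + 2 * N * (P w * (if w ∈ bad then 1 else 0))) := by
    rw [← ENNReal.tsum_mul_left]
    refine ENNReal.tsum_le_tsum fun w => ?_
    by_cases hb : w ∈ bad
    · have : ∑ s, (if w ∈ G s then (1 : ℝ≥0∞) else 0) ≤ N := by
        calc _ ≤ ∑ _s : Sg, (1 : ℝ≥0∞) := Finset.sum_le_sum fun s _ => by split_ifs <;> simp
          _ = N := by simp [hN]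
      simp only [hb, if_true, mul_one]
      calc 2 * (P w * ∑ s, (if w ∈ G s then (1 : ℝ≥0∞) else 0)) ≤ 2 * (P w * N) := by gcongr
        _ = 2 * N * P w := by ring
        _ ≤ _ := le_add_self
    · by_cases hw : w ∈ P.support
      · have e : ∑ s, (if w ∈ G s then (1 : ℝ≥0∞) else 0) =
            ∑ s, (if w ∈ G (fl w s) then (1 : ℝ≥0∞) else 0) :=
          (Equiv.sum_comp (Function.Involutive.toPerm (fl w) (hfl w))
            (fun s => if w ∈ G s then (1 : ℝ≥0∞) else 0)).symm
        have : 2 * ∑ s, (if w ∈ G s then (1 : ℝ≥0∞) else 0) ≤ N := by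
          rw [two_mul]
          nth_rewrite 2 [e]
          rw [← Finset.sum_add_distrib]
          calc _ ≤ ∑ _s : Sg, (1 : ℝ≥0∞) := Finset.sum_le_sum fun s _ => by
                by_cases hs : w ∈ G s
                · simp [hs, hG w hw hb s hs]
                · simp only [hs, if_false, zero_add]
                  split_ifs <;> simp
            _ = N := by simp [hN]
        simp only [hb, if_false, mul_zero, add_zero]
        calc _ = P w * (2 * ∑ s, (if w ∈ G s then (1 : ℝ≥0∞) else 0)) := by ring
          _ ≤ _ := by gcongr
      · have : P w = 0 := by simpa [PMF.mem_support_iff] using hw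
        simp [this]
  rw [ENNReal.tsum_add, ENNReal.tsum_mul_right, ENNReal.tsum_mul_left, P.tsum_coe, one_mul,
    ← h2] at h3
  have h4 : N * (2 * c) ≤ N * (1 + 2 * ∑' w, P w * (if w ∈ bad then 1 else 0)) := by
    calc N * (2 * c) = 2 * (N * c) := by ring
      _ ≤ _ := by gcongr
      _ ≤ _ := h3
      _ = _ := by ring
  exact (ENNReal.mul_le_mul_iff_right hN0 hNt).1 h4

theorem main_universal (B : ℕ → Finset ℕ) (hB : Function.Surjective B)
    (g : ℕ → ℕ) (hg : Superlinear g) (α : ℝ) (hα : 1 ≤ α) :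
      ∃ (V : Adversary (ℕ × ℕ)) (η : ℝ), 0 < η ∧ η < 1 ∧ IsAdditive V ∧
        FixedBudgetAdd V η ∧ UniversalAdversary (Cg B g) α V η := by
  classical
  obtain ⟨code, hc⟩ := hB.hasRightInverse
  obtain ⟨j, hj, hgj⟩ : ∃ j : ℕ, 1 ≤ j ∧ 100 * α * j ≤ g j := by
    obtain ⟨j, h1, h2⟩ := ((Filter.tendsto_atTop.1 hg (100 * α)).and
      (Filter.eventually_ge_atTop 1)).exists
    refine ⟨j, h2, ?_⟩
    rwa [le_div_iff₀ (by exact_mod_cast h2)] at h1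
  have hjR : (1 : ℝ) ≤ j := by exact_mod_cast hj
  obtain ⟨k, hkdef⟩ : ∃ k, k = g j := ⟨_, rfl⟩
  rw [← hkdef] at hgj
  have hk100 : 100 * (j : ℝ) ≤ k := by nlinarith
  have hk : j < k := by
    have : (j : ℝ) < k := by linarith
    exact_mod_cast this
  have hk0 : (0 : ℝ) < k := by linarith
  have hη0 : (0 : ℝ) < 8 / k := by positivity
  refine ⟨fun S => PMF.pure (Vf B code j (8 / k) S), 8 / k, hη0, ?_, ?_, ?_, ?_⟩
  · rw [div_lt_one hk0]; linarith
  · intro S T hT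
    rw [PMF.mem_support_pure_iff] at hT
    rw [hT]
    exact Multiset.le_add_right _ _
  · refine ⟨fun m => m + ⌊(8 / k : ℝ) * m⌋₊, ?_, ?_⟩
    · intro S T hT
      rw [PMF.mem_support_pure_iff] at hT
      rw [hT, Vf_card]
    · intro m
      have h1 := Nat.floor_le (a := (8 / k : ℝ) * m) (by positivity)
      have h2 := Nat.lt_floor_add_one ((8 / k : ℝ) * m)
      push_cast
      constructor <;> linarith
  · rintro ⟨A, mc, hA⟩
    set ε : ℝ := 1 / (100 * j) with hε
    have hε0 : 0 < ε := by positivity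
    have hε1 : ε < 1 := by
      rw [hε, div_lt_one (by positivity)]; linarith
    set m := mc ε (1 / 4) + 1 with hm
    have hn : 0 < 2 * m := by omega
    have hmR : (0 : ℝ) < m := by exact_mod_cast (by omega : 0 < m)
    set μ := lat (2 * m) j k hn hj hk with hμ
    set P := iid μ m with hP
    set r := α * (8 / k) + ε with hr
    set bad : Set (Multiset (LatSp (2 * m))) :=
      {w | ⌊(8 / k : ℝ) * m⌋₊ < Multiset.count (some none) w} with hbad
    have hav := averaging P
      (fun σ : Fin (2 * m) → Bool =>
        {w | tv (A (Vf B code j (8 / k) (w.map (emb code j σ)))) (μ.map (emb code j σ)) ≤ r})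
      bad flipB flipB_flipB ?_ (1 - ENNReal.ofReal (1 / 4)) ?_
    · have hmk := markov μ (some none) m ⌊(8 / k : ℝ) * m⌋₊
      have hsame : ∑' w, P w * (if w ∈ bad then 1 else 0) =
          ∑' w, (iid μ m) w * (if ⌊(8 / k : ℝ) * m⌋₊ < Multiset.count (some none) w
            then 1 else 0) := by
        rw [hP]; rfl
      rw [← hsame] at hmk
      set b := ∑' w, P w * (if w ∈ bad then (1 : ℝ≥0∞) else 0) with hb
      have hbt : b ≠ ⊤ := by
        refine ne_top_of_le_ne_top ENNReal.one_ne_top ?_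
        rw [← P.tsum_coe]
        refine ENNReal.tsum_le_tsum fun w => ?_
        split_ifs <;> simp
      have hμt : μ (some none) = (k : ℝ≥0∞)⁻¹ := rfl
      rw [hμt] at hmk
      have hk0' : (k : ℝ≥0∞) ≠ 0 := by simp; omega
      have hmk' := ENNReal.toReal_mono (ENNReal.mul_ne_top (ENNReal.natCast_ne_top _)
        (ENNReal.inv_ne_top.2 hk0')) hmk
      rw [ENNReal.toReal_mul, ENNReal.toReal_mul, ENNReal.toReal_add (ENNReal.natCast_ne_top _)
        ENNReal.one_ne_top, ENNReal.toReal_inv] at hmk'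
      simp only [ENNReal.toReal_natCast, ENNReal.toReal_one] at hmk'
      have hfl := Nat.lt_floor_add_one ((8 / k : ℝ) * m)
      have hav' := ENNReal.toReal_mono (by simp [ENNReal.mul_eq_top, hbt]) hav
      rw [ENNReal.toReal_mul, ENNReal.toReal_add ENNReal.one_ne_top
        (ENNReal.mul_ne_top (by simp) hbt), ENNReal.toReal_mul,
        ENNReal.toReal_sub_of_le (by rw [ENNReal.ofReal_le_one]; norm_num) ENNReal.one_ne_top,
        ENNReal.toReal_ofReal (by norm_num)] at hav'
      simp only [ENNReal.toReal_one, ENNReal.toReal_ofNat] at hav'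
      have hb4 : 1 / 4 ≤ b.toReal := by linarith
      have hpos : 0 < (m : ℝ) * (k : ℝ)⁻¹ := by positivity
      have e : (8 / k : ℝ) * m = 8 * ((m : ℝ) * (k : ℝ)⁻¹) := by field_simp
      rw [e] at hfl hmk'
      nlinarith
    · intro w hw hwb σ h1 h2
      have hcw : Multiset.card w = m := iid_card μ m w hw
      have hK : w.count (some none) ≤ ⌊(8 / k : ℝ) * (Multiset.card w : ℝ)⌋₊ := by
        rw [hcw]
        exact not_lt.1 hwb
      simp only [Set.mem_ofPred_eq] at h1 h2
      rw [Vf_flip B code hc j (8 / k) σ w hK] at h2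
      have hf := far B code hc m j k hn hj hk σ w hcw _ r h1 h2
      have hj0 : (0 : ℝ) < j := by linarith
      have hαk : α * (8 / k) ≤ 8 / 100 * (j : ℝ)⁻¹ := by
        rw [← div_eq_mul_inv, mul_div_assoc', div_le_div_iff₀ hk0 hj0]
        linarith
      have hkj : (k : ℝ)⁻¹ ≤ 1 / 100 * (j : ℝ)⁻¹ := by
        rw [inv_eq_one_div, ← div_eq_mul_inv, div_le_div_iff₀ hk0 hj0]
        linarith
      have hεj : ε = 1 / 100 * (j : ℝ)⁻¹ := by rw [hε]; field_simp
      have hji : 0 < (j : ℝ)⁻¹ := by positivity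
      rw [hr, hεj] at hf
      linarith
    · intro σ
      have hmem : μ.map (emb code j σ) ∈ Cg B g := by
        refine ⟨code (Bs σ), j, hj, hkdef ▸ hk, ?_, ?_⟩
        · rw [hc, ← Finset.card_pos, Bs_card]; exact hn
        · rw [← hkdef]
          exact isPijk_map B code hc (2 * m) j k hn hj hk σ
      have h := hA _ hmem ε (1 / 4) hε0 hε1 (by norm_num) (by norm_num) m (by omega)
      unfold probEvent at h
      rw [iid_map, PMF.bind_map] at h
      have e : (P.bind ((fun S => PMF.pure (Vf B code j (8 / k) S)) ∘
          Multiset.map (emb code j σ))) =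
          P.map (fun w => Vf B code j (8 / k) (w.map (emb code j σ))) := rfl
      rw [e, PMF.toOuterMeasure_map_apply] at h
      exact h

/-- For every superlinear `g` and every `α ≥ 1`, the class `C_g` is not
adaptively additively α-robustly learnable; moreover there is an adaptive additive adversary
with fixed constant budget that is a universal α-adversary for `C_g`. -/
theorem stmt1 (B : ℕ → Finset ℕ) (hB : Function.Surjective B)
    (g : ℕ → ℕ) (hg : Superlinear g) (α : ℝ) (hα : 1 ≤ α) :
    ¬ AdditivelyRobustlyLearnable (Cg B g) α ∧
      ∃ (V : Adversary (ℕ × ℕ)) (η : ℝ), 0 < η ∧ η < 1 ∧ IsAdditive V ∧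
        FixedBudgetAdd V η ∧ UniversalAdversary (Cg B g) α V η := by
  obtain ⟨V, η, h0, h1, hadd, hbud, huni⟩ := main_universal B hB g hg α hα
  refine ⟨?_, V, η, h0, h1, hadd, hbud, huni⟩
  rintro ⟨A, mc, h⟩
  exact huni ⟨A, mc, h V η h0 h1 hadd hbud⟩
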